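/- (Main theorem, odd unitary analogue of the Gram–Schmidt process.) The subgroup of GL_N(R) generated by the set {θ(v) : v ∈ R^N} ∪ {η(v) : v ∈ R^N} coincides with the elementary linear group E_N(R). -/

import Mathlib

open Matrix

/-- `Emat N i j a` is the elementary matrix `E_{i,j}(a) = I_N + a·e_{ij}`,
where `i, j` are 1-based indices and `e_{ij}` is the matrix unit. -/
def Emat (R : Type*) [Ring R] (N i j : ℕ) (a : R) : Matrix (Fin N) (Fin N) R :=
  1 + Matrix.of (fun r c : Fin N => if r.val + 1 = i ∧ c.val + 1 = j then a else 0)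

/-- The elementary linear group `E_N(R)`: the subgroup of `GL_N(R)` generated by all
elementary matrices `E_{i,j}(a)` with `1 ≤ i ≠ j ≤ N`, `a ∈ R`. -/
def elemGroup (N : ℕ) (R : Type*) [Ring R] : Subgroup (Matrix (Fin N) (Fin N) R)ˣ :=
  Subgroup.closure { M : (Matrix (Fin N) (Fin N) R)ˣ |
    ∃ (i j : ℕ) (a : R), 1 ≤ i ∧ i ≤ N ∧ 1 ≤ j ∧ j ≤ N ∧ i ≠ j ∧
      M.val = Emat R N i j a }

/-- 1-based access to the entries of a vector `v ∈ R^N` (0 outside the range). -/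
def vecEntry {R : Type*} [Ring R] {N : ℕ} (v : Fin N → R) (i : ℕ) : R :=
  if h : 1 ≤ i ∧ i ≤ N then v ⟨i - 1, by omega⟩ else 0

/-- 1-based access to the entries of an `n × n` matrix (0 outside the range). -/
def matEntry {R : Type*} [Ring R] {n : ℕ} (φ : Matrix (Fin n) (Fin n) R) (i j : ℕ) : R :=
  if h : 1 ≤ i ∧ i ≤ n ∧ 1 ≤ j ∧ j ≤ n then φ ⟨i - 1, by omega⟩ ⟨j - 1, by omega⟩ else 0

/-- The matrix `θ(v)` of size `N = n + 2m - 1`: it agrees with the identity matrix except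
in the first row, where (in 1-based indices, with `c` the column index)
`θ(v)_{1,2k} = σ(a_{2k+1})` and `θ(v)_{1,2k+1} = -σ(1)⁻¹·σ(a_{2k})` for `1 ≤ k ≤ m-1`, and
`θ(v)_{1,2m-1+k} = -σ(1)⁻¹·(Σ_{j=1}^{n} σ(a_{2m-1+j})·φ_{jk})` for `1 ≤ k ≤ n`. -/
noncomputable def theta {R : Type*} [Ring R] (σ : R → R) (m n : ℕ)
    (φ : Matrix (Fin n) (Fin n) R) (v : Fin (n + 2*m - 1) → R) :
    Matrix (Fin (n + 2*m - 1)) (Fin (n + 2*m - 1)) R :=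
  Matrix.of fun i j =>
    if i.val = 0 then
      (if j.val + 1 = 1 then 1
       else if j.val + 1 ≤ 2*m - 1 then
         (if (j.val + 1) % 2 = 0 then σ (vecEntry v (j.val + 2))
          else -(Ring.inverse (σ 1)) * σ (vecEntry v j.val))
       else -(Ring.inverse (σ 1)) *
         ∑ l ∈ Finset.Icc 1 n,
           σ (vecEntry v (2*m - 1 + l)) * matEntry φ l (j.val + 1 - (2*m - 1)))
    else if i = j then 1 else 0

/-- The matrix `η(v)` of size `N = n + 2m - 1`: it agrees with the identity matrix except
in the first column, where (in 1-based indices, with `r` the row index)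
`η(v)_{2k,1} = σ(1)⁻²·σ(a_{2k+1})` and `η(v)_{2k+1,1} = -σ(1)⁻¹·σ(a_{2k})` for `1 ≤ k ≤ m-1`,
and `η(v)_{2m-1+k,1} = -σ(1)⁻¹·(Σ_{j=1}^{n} σ(a_{2m-1+j})·ψ_{kj})` for `1 ≤ k ≤ n`,
where `ψ` is (meant to be) `φ⁻¹`. -/
noncomputable def eta {R : Type*} [Ring R] (σ : R → R) (m n : ℕ)
    (ψ : Matrix (Fin n) (Fin n) R) (v : Fin (n + 2*m - 1) → R) :
    Matrix (Fin (n + 2*m - 1)) (Fin (n + 2*m - 1)) R :=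
  Matrix.of fun i j =>
    if j.val = 0 then
      (if i.val + 1 = 1 then 1
       else if i.val + 1 ≤ 2*m - 1 then
         (if (i.val + 1) % 2 = 0 then (Ring.inverse (σ 1))^2 * σ (vecEntry v (i.val + 2))
          else -(Ring.inverse (σ 1)) * σ (vecEntry v i.val))
       else -(Ring.inverse (σ 1)) *
         ∑ l ∈ Finset.Icc 1 n,
           σ (vecEntry v (2*m - 1 + l)) * matEntry ψ (i.val + 1 - (2*m - 1)) l)
    else if i = j then 1 else 0


section Helpers

variable {R : Type*} [Ring R]

/-- A ring element is the value of a unit lying in the subgroup `G`. -/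
def InG {M : Type*} [Ring M] (G : Subgroup Mˣ) (A : M) : Prop := ∃ g ∈ G, g.val = A

theorem InG.mul {M : Type*} [Ring M] {G : Subgroup Mˣ} {A B : M} (hA : InG G A) (hB : InG G B) :
    InG G (A * B) := by
  obtain ⟨g, hg, rfl⟩ := hA
  obtain ⟨h, hh, rfl⟩ := hB
  exact ⟨g * h, G.mul_mem hg hh, rfl⟩

theorem InG.neg {M : Type*} [Ring M] {G : Subgroup Mˣ} {X : M} (hX : X * X = 0)
    (h : InG G (1 + X)) : InG G (1 - X) := by
  obtain ⟨g, hg, hgX⟩ := h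
  refine ⟨g⁻¹, G.inv_mem hg, ?_⟩
  rw [Units.inv_eq_of_mul_eq_one_right]
  rw [hgX]
  noncomm_ring
  simp [hX]

theorem InG.comm {M : Type*} [Ring M] {G : Subgroup Mˣ} {X Y : M} (hX : X * X = 0)
    (hY : Y * Y = 0) (hYX : Y * X = 0)
    (h : InG G (1 + X)) (h' : InG G (1 + Y)) : InG G (1 + X * Y) := by
  have := ((h.mul h').mul (h.neg hX)).mul (h'.neg hY)
  convert this using 1
  have e1 : X * Y * X = 0 := by rw [mul_assoc, hYX, mul_zero]
  have e2 : X * Y * Y = 0 := by rw [mul_assoc, hY, mul_zero]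
  simp only [mul_add, add_mul, mul_sub, sub_mul, mul_one, one_mul, hX, hY, hYX, e1, e2,
    zero_mul, sub_zero, add_zero, zero_add]
  abel

theorem InG.sum {M ι : Type*} [Ring M] {G : Subgroup Mˣ} (S : Finset ι) (X : ι → M)
    (h0 : ∀ i ∈ S, ∀ j ∈ S, X i * X j = 0) (h : ∀ i ∈ S, InG G (1 + X i)) :
    InG G (1 + ∑ i ∈ S, X i) := by
  classical
  induction S using Finset.induction_on with
  | empty => exact ⟨1, G.one_mem, by simp⟩
  | insert a S ha ih =>
    have h1 := ih (fun i hi j hj => h0 i (by simp [hi]) j (by simp [hj]))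
      (fun i hi => h i (by simp [hi]))
    have h2 := (h a (by simp)).mul h1
    convert h2 using 1
    have h3 : X a * ∑ i ∈ S, X i = 0 := by
      rw [Finset.mul_sum]
      exact Finset.sum_eq_zero (fun i hi => h0 a (by simp) i (by simp [hi]))
    rw [Finset.sum_insert ha, mul_add, add_mul, add_mul, h3]
    simp [add_assoc]

theorem single0 {N : ℕ} (i j k l : Fin N) (a b : R) (h : j ≠ k) :
    Matrix.single i j a * Matrix.single k l b = 0 :=
  Matrix.single_mul_single_of_ne a i j _ h b

theorem neg_cancel_unit {u : R} (hu : IsUnit u) (x : R) : -(Ring.inverse u) * (-u * x) = x := by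
  rw [← mul_assoc, neg_mul_neg, Ring.inverse_mul_cancel _ hu, one_mul]

/-- the matrix with row `z` equal to `f` and zeros elsewhere -/
def rowM {N : ℕ} (z : Fin N) (f : Fin N → R) : Matrix (Fin N) (Fin N) R :=
  Matrix.of fun r c => if r = z then f c else 0

/-- the matrix with column `z` equal to `b` and zeros elsewhere -/
def colM {N : ℕ} (z : Fin N) (b : Fin N → R) : Matrix (Fin N) (Fin N) R :=
  Matrix.of fun r c => if c = z then b r else 0

theorem rowM_sq {N : ℕ} (z : Fin N) (f : Fin N → R) (hf : f z = 0) :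
    rowM z f * rowM z f = 0 := by
  ext r c
  simp [rowM, Matrix.mul_apply, hf]

theorem colM_sq {N : ℕ} (z : Fin N) (f : Fin N → R) (hf : f z = 0) :
    colM z f * colM z f = 0 := by
  ext r c
  simp [colM, Matrix.mul_apply, hf]

theorem isUnit_of_sq {M : Type*} [Ring M] {X : M} (hX : X * X = 0) : IsUnit (1 + X) := by
  refine ⟨⟨1 + X, 1 - X, ?_, ?_⟩, rfl⟩ <;> noncomm_ring <;> simp [hX]

theorem rowM_eq_sum {N : ℕ} (z : Fin N) (f : Fin N → R) (hf : f z = 0) :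
    rowM z f = ∑ j ∈ Finset.univ.erase z, Matrix.single z j (f j) := by
  have : rowM z f = ∑ j, Matrix.single z j (f j) := by
    ext r c
    rw [Matrix.sum_apply]
    simp only [rowM, Matrix.of_apply, Matrix.single_apply]
    by_cases h : z = r
    · subst h; simp
    · simp [h, Ne.symm h]
  rw [this, ← Finset.add_sum_erase _ _ (Finset.mem_univ z)]
  simp [hf]

theorem colM_eq_sum {N : ℕ} (z : Fin N) (f : Fin N → R) (hf : f z = 0) :
    colM z f = ∑ j ∈ Finset.univ.erase z, Matrix.single j z (f j) := by
  have : colM z f = ∑ j, Matrix.single j z (f j) := by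
    ext r c
    rw [Matrix.sum_apply]
    simp only [colM, Matrix.of_apply, Matrix.single_apply]
    by_cases h : z = c
    · subst h; simp
    · simp [h, Ne.symm h]
  rw [this, ← Finset.add_sum_erase _ _ (Finset.mem_univ z)]
  simp [hf]

theorem InG_rowM {N : ℕ} {G : Subgroup (Matrix (Fin N) (Fin N) R)ˣ} (z : Fin N)
    (f : Fin N → R) (hf : f z = 0)
    (h : ∀ j, j ≠ z → ∀ a, InG G (1 + Matrix.single z j a)) : InG G (1 + rowM z f) := by
  rw [rowM_eq_sum z f hf]
  apply InG.sum
  · intro i hi j hj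
    exact single0 _ _ _ _ _ _ (by simpa using hi)
  · intro i hi
    exact h i (by simpa using hi) _

theorem InG_colM {N : ℕ} {G : Subgroup (Matrix (Fin N) (Fin N) R)ˣ} (z : Fin N)
    (f : Fin N → R) (hf : f z = 0)
    (h : ∀ j, j ≠ z → ∀ a, InG G (1 + Matrix.single j z a)) : InG G (1 + colM z f) := by
  rw [colM_eq_sum z f hf]
  apply InG.sum
  · intro i hi j hj
    exact single0 _ _ _ _ _ _ (Ne.symm (by simpa using hj))
  · intro i hi
    exact h i (by simpa using hi) _

theorem Emat_eq {N : ℕ} (i j : Fin N) (a : R) :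
    Emat R N (i.val + 1) (j.val + 1) a = 1 + Matrix.single i j a := by
  unfold Emat
  congr 1
  ext r c
  simp only [Matrix.of_apply, Matrix.single_apply, Fin.ext_iff]
  congr 1
  apply propext
  constructor <;> rintro ⟨h, h'⟩ <;> constructor <;> omega

theorem InG_elem {N : ℕ} (i j : Fin N) (hij : i ≠ j) (a : R) :
    InG (elemGroup N R) (1 + Matrix.single i j a) := by
  obtain ⟨g, hg⟩ : IsUnit (1 + Matrix.single i j a : Matrix (Fin N) (Fin N) R) :=
    isUnit_of_sq (single0 _ _ _ _ _ _ (Ne.symm hij))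
  refine ⟨g, Subgroup.subset_closure
    ⟨i.val + 1, j.val + 1, a, by omega, by omega, by omega, by omega, ?_, ?_⟩, hg⟩
  · intro h; exact hij (Fin.ext (by omega))
  · rw [hg, Emat_eq]

theorem elem_le {N : ℕ} (G : Subgroup (Matrix (Fin N) (Fin N) R)ˣ)
    (h : ∀ i j : Fin N, i ≠ j → ∀ a : R, InG G (1 + Matrix.single i j a)) :
    elemGroup N R ≤ G := by
  unfold elemGroup
  rw [Subgroup.closure_le]
  rintro M ⟨i, j, a, h1, h2, h3, h4, hij, hM⟩
  obtain ⟨g, hg, hgM⟩ := h ⟨i - 1, by omega⟩ ⟨j - 1, by omega⟩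
    (by intro h; simp only [Fin.mk.injEq] at h; omega) a
  rw [← Emat_eq] at hgM
  simp only [Nat.sub_add_cancel h1, Nat.sub_add_cancel h3] at hgM
  have : M = g := Units.ext (hM.trans hgM.symm)
  rw [this]; exact hg

theorem rowM_single {N : ℕ} (z j : Fin N) (a : R) :
    rowM z (Pi.single j a) = Matrix.single z j a := by
  ext r c
  simp only [rowM, Matrix.of_apply, Matrix.single_apply, Pi.single_apply]
  by_cases h : r = z <;> by_cases h' : c = j <;> simp [h, h', eq_comm]
  all_goals grind

theorem colM_single {N : ℕ} (z j : Fin N) (a : R) :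
    colM z (Pi.single j a) = Matrix.single j z a := by
  ext r c
  simp only [colM, Matrix.of_apply, Matrix.single_apply, Pi.single_apply]
  by_cases h : c = z <;> by_cases h' : r = j <;> simp [h, h', eq_comm]
  all_goals grind

/-- If `G` has all first rows and all first columns, it contains the elementary group. -/
theorem core_full {N : ℕ} (G : Subgroup (Matrix (Fin N) (Fin N) R)ˣ) (z : Fin N)
    (hrow : ∀ f : Fin N → R, f z = 0 → InG G (1 + rowM z f))
    (hcol : ∀ f : Fin N → R, f z = 0 → InG G (1 + colM z f)) : elemGroup N R ≤ G := by
  have hr : ∀ j, j ≠ z → ∀ a, InG G (1 + Matrix.single z j a) := by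
    intro j hj a
    rw [← rowM_single]
    exact hrow _ (by simp [Pi.single_apply, hj.symm])
  have hc : ∀ j, j ≠ z → ∀ a, InG G (1 + Matrix.single j z a) := by
    intro j hj a
    rw [← colM_single]
    exact hcol _ (by simp [Pi.single_apply, hj.symm])
  apply elem_le
  intro i j hij a
  by_cases hi : i = z
  · subst hi; exact hr j (Ne.symm hij) a
  by_cases hj : j = z
  · subst hj; exact hc i hij a
  have := InG.comm (single0 _ _ _ _ _ _ (Ne.symm hi))
    (single0 _ _ _ _ _ _ hj)
    (single0 _ _ _ _ _ _ (Ne.symm hij)) (hc i hi a) (hr j hj 1)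
  simpa using this

/-- All first rows, and a basis of first columns, suffice when `N ≥ 3`. -/
theorem core {N : ℕ} (hN : 3 ≤ N) (G : Subgroup (Matrix (Fin N) (Fin N) R)ˣ) (z : Fin N)
    (P Q : Matrix (Fin N) (Fin N) R) (hPQ : P * Q = 1) (hQP : Q * P = 1)
    (hPr : ∀ i, P i z = if i = z then 1 else 0)
    (hQr : ∀ i, Q z i = if i = z then 1 else 0)
    (hQc : ∀ i, Q i z = if i = z then 1 else 0)
    (hrow : ∀ f : Fin N → R, f z = 0 → InG G (1 + rowM z f))
    (hcol : ∀ i, i ≠ z → InG G (1 + colM z (fun r => P r i))) : elemGroup N R ≤ G := by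
  have mulX : ∀ (A B : Matrix (Fin N) (Fin N) R), (P * A * Q) * (P * B * Q) = P * (A * B) * Q := by
    intro A B
    calc (P * A * Q) * (P * B * Q) = P * A * (Q * P) * B * Q := by simp only [mul_assoc]
      _ = _ := by rw [hQP]; simp only [mul_assoc, one_mul]
  have X0 : ∀ (i j k l : Fin N) (a b : R), j ≠ k →
      (P * Matrix.single i j a * Q) * (P * Matrix.single k l b * Q) = 0 := by
    intro i j k l a b h
    rw [mulX, single0 _ _ _ _ _ _ h, mul_zero, zero_mul]
  have hA : ∀ j, j ≠ z → ∀ a, InG G (1 + P * Matrix.single z j a * Q) := by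
    intro j hj a
    convert hrow (fun c => a * Q j c) (by simp [hQc, hj]) using 2
    ext r c
    have : P * Matrix.single z j a = Matrix.single z j a := by
      ext r c
      rw [Matrix.mul_apply]
      simp only [Matrix.single_apply]
      by_cases hc : j = c <;> by_cases hr : r = z <;> simp [hc, hr, hPr, eq_comm]
      grind
    rw [this, Matrix.mul_apply]
    by_cases hr : z = r
    · subst hr; simp [rowM, Matrix.single_apply]
    · simp [rowM, Matrix.single_apply, hr, Ne.symm hr]
  have hS : ∀ j a, Matrix.single j z a * Q = Matrix.single j z a := by
      intro j a
      ext r c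
      rw [Matrix.mul_apply]
      simp only [Matrix.single_apply]
      by_cases hc : j = r <;> by_cases hr : c = z <;> simp [hc, hr, hQr, eq_comm]
      grind
  have hB : ∀ j, j ≠ z → InG G (1 + P * Matrix.single j z 1 * Q) := by
    intro j hj
    convert hcol j hj using 2
    rw [mul_assoc, hS]
    ext r c
    rw [Matrix.mul_apply]
    by_cases hr : z = c
    · subst hr; simp [colM, Matrix.single_apply]
    · simp [colM, Matrix.single_apply, hr, Ne.symm hr]
  have hC : ∀ i j, i ≠ z → j ≠ z → i ≠ j → ∀ a, InG G (1 + P * Matrix.single i j a * Q) := by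
    intro i j hi hj hij a
    have := InG.comm (X0 _ _ _ _ _ _ hi.symm) (X0 _ _ _ _ _ _ hj)
      (X0 _ _ _ _ _ _ hij.symm) (hB i hi) (hA j hj a)
    rw [mulX] at this
    simpa using this
  have hD : ∀ i, i ≠ z → ∀ a, InG G (1 + P * Matrix.single i z a * Q) := by
    intro i hi a
    obtain ⟨j, hj⟩ : ∃ j : Fin N, j ∉ ({i, z} : Finset (Fin N)) := by
      by_contra! hcon
      have h1 : (Finset.univ : Finset (Fin N)) ⊆ {i, z} := fun x _ => hcon x
      have h2 := Finset.card_le_card h1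
      have h3 := Finset.card_le_two (a := i) (b := z)
      simp at h2
      omega
    simp only [Finset.mem_insert, Finset.mem_singleton, not_or] at hj
    have := InG.comm (X0 _ _ _ _ _ _ hj.1) (X0 _ _ _ _ _ _ (Ne.symm hj.2))
      (X0 _ _ _ _ _ _ hi.symm) (hC i j hi hj.2 (Ne.symm hj.1) a) (hB j hj.2)
    rw [mulX] at this
    simpa using this
  apply core_full G z hrow
  intro f hf
  have key : colM z f = ∑ j ∈ Finset.univ.erase z, P * Matrix.single j z ((Q *ᵥ f) j) * Q := by
    rw [← Finset.sum_mul, ← Finset.mul_sum, ← colM_eq_sum]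
    · have h1 : colM z (Q *ᵥ f) = Q * colM z f := by
        ext r c
        rw [Matrix.mul_apply]
        by_cases hc : c = z <;> simp [colM, hc, Matrix.mulVec, dotProduct]
      rw [h1, ← mul_assoc, hPQ, one_mul, colM_eq_sum z f hf, Finset.sum_mul]
      simp only [hS]
    · simp [Matrix.mulVec, dotProduct, hQr, hf]
  rw [key]
  apply InG.sum
  · intro i hi j hj
    exact X0 _ _ _ _ _ _ (Ne.symm (by simpa using hj))
  · intro i hi
    exact hD i (by simpa using hi) _

theorem exists_vec {N : ℕ} (σ : R → R) (hσinv : ∀ r : R, σ (σ r) = r) (s : ℕ → R) :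
    ∃ v : Fin N → R, ∀ i, 1 ≤ i → i ≤ N → σ (vecEntry v i) = s i := by
  refine ⟨fun i => σ (s (i.val + 1)), fun i h1 h2 => ?_⟩
  simp only [vecEntry, h1, h2, and_self, dite_true]
  rw [hσinv, Nat.sub_add_cancel h1]

/-- the first row of `theta`, with its diagonal entry removed -/
theorem theta_eq (σ : R → R) (m n : ℕ) (φ : Matrix (Fin n) (Fin n) R)
    (v : Fin (n + 2*m - 1) → R) (z : Fin (n + 2*m - 1)) (hz : z.val = 0) :
    theta σ m n φ v = 1 + rowM z (fun j => if j = z then 0 else theta σ m n φ v z j) := by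
  ext r c
  by_cases hr : r = z
  · subst hr
    by_cases hc : c = r
    · subst hc; simp [theta, rowM, hz]
    · simp [rowM, hc, Ne.symm hc, Matrix.one_apply]
  · have : r.val ≠ 0 := fun h => hr (Fin.ext (by omega))
    simp [theta, rowM, hr, this, Matrix.one_apply]

theorem eta_eq (σ : R → R) (m n : ℕ) (φ : Matrix (Fin n) (Fin n) R)
    (v : Fin (n + 2*m - 1) → R) (z : Fin (n + 2*m - 1)) (hz : z.val = 0) :
    eta σ m n φ v = 1 + colM z (fun j => if j = z then 0 else eta σ m n φ v j z) := by
  ext c r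
  by_cases hr : r = z
  · subst hr
    by_cases hc : c = r
    · subst hc; simp [eta, colM, hz]
    · simp [colM, hc, Matrix.one_apply]
  · have : r.val ≠ 0 := fun h => hr (Fin.ext (by omega))
    simp [eta, colM, hr, this, Matrix.one_apply]

theorem sum_matEntry {n : ℕ} (φ ψ : Matrix (Fin n) (Fin n) R) (h : ψ * φ = 1)
    (i j : ℕ) (hi : 1 ≤ i) (hi' : i ≤ n) (hj : 1 ≤ j) (hj' : j ≤ n) :
    ∑ l ∈ Finset.Icc 1 n, matEntry ψ i l * matEntry φ l j = if i = j then 1 else 0 := by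
  have h1 := congrFun (congrFun h ⟨i - 1, by omega⟩) ⟨j - 1, by omega⟩
  rw [Matrix.mul_apply, Matrix.one_apply] at h1
  have h2 : (if i = j then (1 : R) else 0) =
      if (⟨i - 1, by omega⟩ : Fin n) = ⟨j - 1, by omega⟩ then 1 else 0 := by
    congr 1
    simp only [Fin.mk.injEq, eq_iff_iff]
    omega
  rw [h2, ← h1]
  symm
  refine Finset.sum_bij (fun l _ => l.val + 1) ?_ ?_ ?_ ?_
  · intro l _; simp only [Finset.mem_Icc]; omega
  · intro a _ b _ hab; exact Fin.ext (by omega)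
  · intro b hb
    simp only [Finset.mem_Icc] at hb
    exact ⟨⟨b - 1, by omega⟩, Finset.mem_univ _, by simp only; omega⟩
  · intro l _
    have : l.val + 1 ≤ n := l.isLt
    simp [matEntry, hi, hi', hj, hj', this]

theorem theta_surj (σ : R → R) (hσinv : ∀ r : R, σ (σ r) = r) (hσone : IsUnit (σ 1))
    (m n : ℕ) (hm : 1 ≤ m) (φ ψ : Matrix (Fin n) (Fin n) R) (h : ψ * φ = 1)
    (z : Fin (n + 2*m - 1)) (hz : z.val = 0) (f : Fin (n + 2*m - 1) → R) (hf : f z = 0) :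
    ∃ v, theta σ m n φ v = 1 + rowM z f := by
  obtain ⟨v, hv⟩ := exists_vec (N := n + 2*m - 1) σ hσinv (fun i =>
    if i ≤ 2*m - 1 then
      (if i % 2 = 1 then vecEntry f (i - 1) else -(σ 1) * vecEntry f (i + 1))
    else -(σ 1) * ∑ k ∈ Finset.Icc 1 n,
      vecEntry f (2*m - 1 + k) * matEntry ψ k (i - (2*m - 1)))
  refine ⟨v, ?_⟩
  rw [theta_eq σ m n φ v z hz]
  congr 2
  funext j
  by_cases hj : j = z
  · simp [hj, hf]
  have hj0 : j.val ≠ 0 := fun h => hj (Fin.ext (by omega))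
  have hfj : vecEntry f (j.val + 1) = f j := by
    have : j.val + 1 ≤ n + 2*m - 1 := j.isLt
    simp [vecEntry, this]
  have hlt := j.isLt
  simp only [hj, if_false, theta, Matrix.of_apply, hz, if_true]
  rw [if_neg (by omega)]
  split_ifs with h1 h2
  · rw [hv _ (by omega) (by omega), if_pos (by omega), if_pos (by omega)]
    exact hfj
  · rw [hv _ (by omega) (by omega), if_pos (by omega), if_neg (by omega), hfj,
      neg_cancel_unit hσone]
  · have : ∀ l ∈ Finset.Icc 1 n, σ (vecEntry v (2*m - 1 + l)) * matEntry φ l (j.val + 1 - (2*m - 1))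
        = -(σ 1) * ∑ k ∈ Finset.Icc 1 n, vecEntry f (2*m - 1 + k) *
          (matEntry ψ k l * matEntry φ l (j.val + 1 - (2*m - 1))) := by
      intro l hl
      simp only [Finset.mem_Icc] at hl
      rw [hv _ (by omega) (by omega), if_neg (by omega), mul_assoc, Finset.sum_mul]
      simp only [mul_assoc, Nat.add_sub_cancel_left]
    rw [Finset.sum_congr rfl this, ← Finset.mul_sum, Finset.sum_comm,
      neg_cancel_unit hσone]
    have h3 : ∀ k ∈ Finset.Icc 1 n, ∑ l ∈ Finset.Icc 1 n, vecEntry f (2*m - 1 + k) *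
          (matEntry ψ k l * matEntry φ l (j.val + 1 - (2*m - 1))) =
          if k = j.val + 1 - (2*m-1) then vecEntry f (2*m - 1 + k) else 0 := by
      intro k hk
      simp only [Finset.mem_Icc] at hk
      rw [← Finset.mul_sum, sum_matEntry φ ψ h _ _ hk.1 hk.2 (by omega) (by omega)]
      simp
    rw [Finset.sum_congr rfl h3, Finset.sum_ite_eq', if_pos (by
      simp only [Finset.mem_Icc]; omega), ← hfj]
    congr 1
    omega

theorem eta_surj (σ : R → R) (hσinv : ∀ r : R, σ (σ r) = r) (hσone : IsUnit (σ 1))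
    (m n : ℕ) (hm : 1 ≤ m) (ψ : Matrix (Fin n) (Fin n) R)
    (z : Fin (n + 2*m - 1)) (hz : z.val = 0) (f : Fin (n + 2*m - 1) → R) (hf : f z = 0)
    (c : ℕ → R) (hc : ∀ k, 1 ≤ k → k ≤ n → vecEntry f (2*m - 1 + k) =
      if 2*m - 1 + k = 1 then 0 else ∑ l ∈ Finset.Icc 1 n, c l * matEntry ψ k l) :
    ∃ v, eta σ m n ψ v = 1 + colM z f := by
  obtain ⟨v, hv⟩ := exists_vec (N := n + 2*m - 1) σ hσinv (fun i =>
    if i ≤ 2*m - 1 then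
      (if i % 2 = 1 then (σ 1) ^ 2 * vecEntry f (i - 1) else -(σ 1) * vecEntry f (i + 1))
    else -(σ 1) * c (i - (2*m - 1)))
  refine ⟨v, ?_⟩
  rw [eta_eq σ m n ψ v z hz]
  congr 2
  funext j
  by_cases hj : j = z
  · simp [hj, hf]
  have hj0 : j.val ≠ 0 := fun h => hj (Fin.ext (by omega))
  have hfj : vecEntry f (j.val + 1) = f j := by
    have : j.val + 1 ≤ n + 2*m - 1 := j.isLt
    simp [vecEntry, this]
  have hlt := j.isLt
  have hinv := Ring.inverse_mul_cancel _ hσone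
  simp only [hj, if_false, eta, Matrix.of_apply, hz, if_true]
  rw [if_neg (by omega)]
  split_ifs with h1 h2
  · rw [hv _ (by omega) (by omega), if_pos (by omega), if_pos (by omega), ← mul_assoc]
    have : Ring.inverse (σ 1) ^ 2 * σ 1 ^ 2 = 1 := by
      rw [pow_two, pow_two, mul_assoc, ← mul_assoc _ (σ 1) (σ 1), hinv, one_mul, hinv]
    rw [this, one_mul]
    exact hfj
  · rw [hv _ (by omega) (by omega), if_pos (by omega), if_neg (by omega), hfj,
      neg_cancel_unit hσone]
  · have : ∀ l ∈ Finset.Icc 1 n, σ (vecEntry v (2*m - 1 + l)) * matEntry ψ (j.val + 1 - (2*m - 1)) l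
        = -(σ 1) * (c l * matEntry ψ (j.val + 1 - (2*m - 1)) l) := by
      intro l hl
      simp only [Finset.mem_Icc] at hl
      rw [hv _ (by omega) (by omega), if_neg (by omega), mul_assoc]
      simp only [Nat.add_sub_cancel_left]
    have h4 := hc (j.val + 1 - (2*m - 1)) (by omega) (by omega)
    rw [if_neg (by omega), show 2*m - 1 + (j.val + 1 - (2*m - 1)) = j.val + 1 by omega, hfj] at h4
    rw [Finset.sum_congr rfl this, ← Finset.mul_sum, neg_cancel_unit hσone, h4]

/-- block diagonal matrix `diag(1, ψ)` -/
def blk (m n : ℕ) (ψ : Matrix (Fin n) (Fin n) R) :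
    Matrix (Fin (n + 2*m - 1)) (Fin (n + 2*m - 1)) R :=
  Matrix.of fun i j =>
    if i.val < 2*m - 1 ∨ j.val < 2*m - 1 then (if i = j then 1 else 0)
    else matEntry ψ (i.val + 1 - (2*m - 1)) (j.val + 1 - (2*m - 1))

theorem blk_mul (m n : ℕ) (hm : 1 ≤ m) (φ ψ : Matrix (Fin n) (Fin n) R) (h : φ * ψ = 1) :
    blk m n φ * blk m n ψ = 1 := by
  ext i j
  rw [Matrix.mul_apply, Matrix.one_apply]
  by_cases hi : i.val < 2*m - 1
  · rw [Finset.sum_eq_single i]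
    · simp [blk, hi]
    · intro b _ hb
      simp [blk, hi, hb.symm]
    · simp
  by_cases hj : j.val < 2*m - 1
  · rw [Finset.sum_eq_single j]
    · simp [blk, hj]
    · intro b _ hb
      simp [blk, hj, hb]
    · simp
  have h1 := sum_matEntry ψ φ h (i.val + 1 - (2*m-1)) (j.val + 1 - (2*m-1))
    (by omega) (by omega) (by omega) (by omega)
  have h2 : (if i = j then (1 : R) else 0) =
      if i.val + 1 - (2*m-1) = j.val + 1 - (2*m-1) then 1 else 0 := by
    congr 1
    simp only [Fin.ext_iff, eq_iff_iff]
    omega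
  rw [h2, ← h1]
  symm
  refine Finset.sum_bij_ne_zero (fun l hl _ => ⟨2*m - 1 + l - 1, by
      simp only [Finset.mem_Icc] at hl; omega⟩) ?_ ?_ ?_ ?_
  · intro l _ _; exact Finset.mem_univ _
  · intro a ha _ b hb _ hab
    simp only [Finset.mem_Icc] at ha hb
    simp only [Fin.mk.injEq] at hab
    omega
  · intro b _ hb
    by_cases hb' : b.val < 2*m - 1
    · exfalso; apply hb
      have : i ≠ b := fun h => hi (h ▸ hb')
      simp [blk, hb', this]
    · refine ⟨b.val + 1 - (2*m-1), by simp only [Finset.mem_Icc]; omega, ?_, ?_⟩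
      · simpa [blk, hi, hj, hb'] using hb
      · apply Fin.ext; simp only; omega
  · intro l hl _
    simp only [Finset.mem_Icc] at hl
    have h3 : ¬ (2*m - 1 + l - 1 < 2*m - 1) := by omega
    have h4 : 2*m - 1 + l - 1 + 1 - (2*m - 1) = l := by omega
    simp only [blk, Matrix.of_apply, hi, hj, h3, h4, or_self, if_false]

end Helpers

/-- Main theorem, odd unitary analogue of the Gram–Schmidt process:
the matrices `θ(v)` and `η(v)` are invertible, and the subgroup of `GL_N(R)` generated by
`{θ(v) : v ∈ R^N} ∪ {η(v) : v ∈ R^N}` coincides with the elementary linear group `E_N(R)`.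
Here `N = n + 2m - 1` and `ψ` plays the role of `φ⁻¹`. -/
theorem closure_theta_eta_eq_elemGroup {R : Type*} [Ring R]
    (σ : R → R)
    (hσadd : ∀ r s : R, σ (r + s) = σ r + σ s)
    (hσmul : ∀ r s : R, σ (r * s) = σ s * Ring.inverse (σ 1) * σ r)
    (hσinv : ∀ r : R, σ (σ r) = r)
    (hσone : IsUnit (σ 1))
    (m n : ℕ) (hm : 1 ≤ m) (hn : 1 ≤ n) (hN : 2 ≤ n + 2*m - 1)
    (φ ψ : Matrix (Fin n) (Fin n) R) (hψ : φ * ψ = 1 ∧ ψ * φ = 1) :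
    (∀ v : Fin (n + 2*m - 1) → R, IsUnit (theta σ m n φ v)) ∧
    (∀ v : Fin (n + 2*m - 1) → R, IsUnit (eta σ m n ψ v)) ∧
    Subgroup.closure { M : (Matrix (Fin (n + 2*m - 1)) (Fin (n + 2*m - 1)) R)ˣ |
        ∃ v : Fin (n + 2*m - 1) → R,
          M.val = theta σ m n φ v ∨ M.val = eta σ m n ψ v } =
      elemGroup (n + 2*m - 1) R := by
  have hz : ∃ z : Fin (n + 2*m - 1), z.val = 0 := ⟨⟨0, by omega⟩, rfl⟩
  obtain ⟨z, hz⟩ := hz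
  have uT : ∀ v : Fin (n + 2*m - 1) → R, IsUnit (theta σ m n φ v) := by
    intro v
    rw [theta_eq σ m n φ v z hz]
    exact isUnit_of_sq (rowM_sq _ _ (by simp))
  have uE : ∀ v : Fin (n + 2*m - 1) → R, IsUnit (eta σ m n ψ v) := by
    intro v
    rw [eta_eq σ m n ψ v z hz]
    exact isUnit_of_sq (colM_sq _ _ (by simp))
  refine ⟨uT, uE, le_antisymm ?_ ?_⟩
  · rw [Subgroup.closure_le]
    rintro M ⟨v, hM | hM⟩
    · obtain ⟨g, hg, hgM⟩ := InG_rowM (G := elemGroup (n + 2*m - 1) R) z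
        (fun j => if j = z then 0 else theta σ m n φ v z j) (by simp)
        (fun j hj a => InG_elem z j hj.symm a)
      rw [← theta_eq σ m n φ v z hz] at hgM
      have : M = g := Units.ext (hM.trans hgM.symm)
      rw [this]; exact hg
    · obtain ⟨g, hg, hgM⟩ := InG_colM (G := elemGroup (n + 2*m - 1) R) z
        (fun j => if j = z then 0 else eta σ m n ψ v j z) (by simp)
        (fun j hj a => InG_elem j z hj a)
      rw [← eta_eq σ m n ψ v z hz] at hgM
      have : M = g := Units.ext (hM.trans hgM.symm)
      rw [this]; exact hg
  · generalize hG : Subgroup.closure { M : (Matrix (Fin (n + 2*m - 1)) (Fin (n + 2*m - 1)) R)ˣ |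
        ∃ v : Fin (n + 2*m - 1) → R,
          M.val = theta σ m n φ v ∨ M.val = eta σ m n ψ v } = G
    have hrow : ∀ f : Fin (n + 2*m - 1) → R, f z = 0 → InG G (1 + rowM z f) := by
      intro f hf
      obtain ⟨v, hv⟩ := theta_surj σ hσinv hσone m n hm φ ψ hψ.2 z hz f hf
      obtain ⟨g, hg⟩ := uT v
      rw [← hv, ← hG]
      exact ⟨g, Subgroup.subset_closure ⟨v, Or.inl hg⟩, hg⟩
    have hcol : ∀ (f : Fin (n + 2*m - 1) → R) (_ : f z = 0)
        (c : ℕ → R) (_ : ∀ k, 1 ≤ k → k ≤ n → vecEntry f (2*m - 1 + k) =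
          if 2*m - 1 + k = 1 then 0 else ∑ l ∈ Finset.Icc 1 n, c l * matEntry ψ k l),
        InG G (1 + colM z f) := by
      intro f hf c hc
      obtain ⟨v, hv⟩ := eta_surj σ hσinv hσone m n hm ψ z hz f hf c hc
      obtain ⟨g, hg⟩ := uE v
      rw [← hv, ← hG]
      exact ⟨g, Subgroup.subset_closure ⟨v, Or.inr hg⟩, hg⟩
    by_cases hN3 : 3 ≤ n + 2*m - 1
    · have hblk : ∀ χ : Matrix (Fin n) (Fin n) R, ∀ i,
          blk m n χ i z = if i = z then 1 else 0 := by
        intro χ i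
        have : z.val < 2*m - 1 := by omega
        simp [blk, this]
      have hblk' : ∀ χ : Matrix (Fin n) (Fin n) R, ∀ i,
          blk m n χ z i = if i = z then 1 else 0 := by
        intro χ i
        have : z.val < 2*m - 1 := by omega
        simp [blk, this, eq_comm]
      refine core hN3 G z (blk m n ψ) (blk m n φ) (blk_mul m n hm _ _ hψ.2)
        (blk_mul m n hm _ _ hψ.1) (hblk ψ) (hblk' φ) (hblk φ) hrow ?_
      intro i hi
      refine hcol _ (by simp only [hblk', hi, if_false])
        (fun l => if l + (2*m - 1) = i.val + 1 then 1 else 0) ?_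
      intro k hk hk'
      rw [if_neg (by omega)]
      have hle : 1 ≤ 2*m - 1 + k ∧ 2*m - 1 + k ≤ n + 2*m - 1 := by omega
      have h3 : ¬ (2*m - 1 + k - 1 < 2*m - 1) := by omega
      have h4 : 2*m - 1 + k - 1 + 1 - (2*m - 1) = k := by omega
      simp only [vecEntry, hle, and_self, dite_true, blk, Matrix.of_apply, h3, h4, false_or]
      by_cases h5 : i.val < 2*m - 1
      · rw [if_pos h5, if_neg (by rw [Fin.ext_iff]; simp only; omega), Finset.sum_eq_zero]
        intro l hl
        simp only [Finset.mem_Icc] at hl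
        rw [if_neg (by omega), zero_mul]
      · rw [if_neg h5, Finset.sum_eq_single (i.val + 1 - (2*m - 1))]
        · rw [if_pos (by omega), one_mul]
        · intro b hb hb'
          rw [if_neg (by omega), zero_mul]
        · intro hcon
          simp only [Finset.mem_Icc] at hcon
          omega
    · have hm1 : m = 1 := by omega
      have hn1 : n = 1 := by omega
      subst hm1
      subst hn1
      apply core_full G z hrow
      intro f hf
      refine hcol f hf (fun _ => vecEntry f 2 * matEntry φ 1 1) ?_
      intro k hk hk'
      have : k = 1 := by omega
      subst this
      have h1 := sum_matEntry ψ φ hψ.1 1 1 le_rfl le_rfl le_rfl le_rfl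
      simp only [Finset.Icc_self, Finset.sum_singleton, if_true] at h1
      simp [mul_assoc, h1]
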